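/- For every integer n ≥ 4, the cyclic matching sequencibility of K_n equals the matching sequencibility of K_n if n is even, and equals the matching sequencibility of K_n minus 1 if n is odd. -/

import Mathlib

/-- Two edges of a graph (as unordered pairs of vertices) are *disjoint*
if they share no vertex. -/
def edgesDisjoint {V : Type*} (e₁ e₂ : Sym2 V) : Prop :=
  ∀ v : V, v ∈ e₁ → v ∉ e₂

/-- The number of edges of a graph `G`. -/
noncomputable def edgeCount {V : Type*} (G : SimpleGraph V) : ℕ :=
  Nat.card G.edgeSet

/-- A linear ordering `f` of the edges of `G` has matching number at least `d`
if every `d` consecutive edges in the ordering are pairwise disjoint. -/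
def LinearGood {V : Type*} (G : SimpleGraph V)
    (f : Fin (edgeCount G) ≃ G.edgeSet) (d : ℕ) : Prop :=
  ∀ j k : Fin (edgeCount G), j ≠ k → (j : ℕ) < (k : ℕ) + d → (k : ℕ) < (j : ℕ) + d →
    edgesDisjoint (f j : Sym2 V) (f k : Sym2 V)

/-- The matching sequencibility `ms G`: the largest `d` (necessarily at most the
number of edges) for which some linear ordering of the edges of `G` has every
`d` consecutive edges forming a matching. -/
noncomputable def ms {V : Type*} (G : SimpleGraph V) : ℕ :=
  sSup {d : ℕ | d ≤ edgeCount G ∧ ∃ f : Fin (edgeCount G) ≃ G.edgeSet, LinearGood G f d}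

/-- A cyclic ordering `f : ZMod N ≃ edges of G` has cyclic matching number at least `d`
if every `d` cyclically consecutive edges in the ordering are pairwise disjoint. -/
def CyclicGood {V : Type*} (G : SimpleGraph V) {N : ℕ}
    (f : ZMod N ≃ G.edgeSet) (d : ℕ) : Prop :=
  ∀ (i : ZMod N) (j k : ℕ), j < d → k < d → j ≠ k →
    edgesDisjoint (f (i + (j : ZMod N)) : Sym2 V) (f (i + (k : ZMod N)) : Sym2 V)

/-- The cyclic matching sequencibility `cms G`: the largest `d` for which some
cyclic ordering of the edges of `G` has every `d` cyclically consecutive edges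
forming a matching. -/
noncomputable def cms {V : Type*} (G : SimpleGraph V) : ℕ :=
  sSup {d : ℕ | ∃ f : ZMod (edgeCount G) ≃ G.edgeSet, CyclicGood G f d}


/-! ### Generalities -/

theorem edgeCount_top (n : ℕ) : edgeCount (⊤ : SimpleGraph (Fin n)) = n.choose 2 := by
  classical
  unfold edgeCount
  rw [Nat.card_eq_fintype_card, ← SimpleGraph.edgeFinset_card,
    SimpleGraph.card_edgeFinset_top_eq_card_choose_two, Fintype.card_fin]

theorem choose_odd (k : ℕ) : (2 * k + 1).choose 2 = k * (2 * k + 1) := by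
  rw [Nat.choose_two_right]
  apply Nat.div_eq_of_eq_mul_left (by norm_num)
  simp only [Nat.add_sub_cancel]; ring

theorem choose_even (k : ℕ) : (2 * (k + 1)).choose 2 = (k + 1) * (2 * k + 1) := by
  rw [Nat.choose_two_right]
  apply Nat.div_eq_of_eq_mul_left (by norm_num)
  have : 2 * (k + 1) - 1 = 2 * k + 1 := by omega
  rw [this]; ring

/-- Division with remainder for two nearby numbers. -/
theorem near_div (B s t : ℕ) (h1 : s < t) (h2 : t < s + B) :
    (t / B = s / B ∧ t % B + s = s % B + t) ∨
    (t / B = s / B + 1 ∧ t % B + B + s = s % B + t) := by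
  have hs := Nat.div_add_mod s B
  have ht := Nat.div_add_mod t B
  have hB : 0 < B := by omega
  have l1 := Nat.mod_lt s hB
  have l2 := Nat.mod_lt t hB
  have h3 : s / B ≤ t / B := Nat.div_le_div_right h1.le
  have h4 : t / B ≤ s / B + 1 := by
    rw [← Nat.add_div_right s hB]; exact Nat.div_le_div_right h2.le
  rcases (by omega : t / B = s / B ∨ t / B = s / B + 1) with h | h
  · left; refine ⟨h, ?_⟩; rw [h] at ht; omega
  · right; refine ⟨h, ?_⟩; rw [h, mul_add] at ht; omega

theorem div_mod_ext (B s t : ℕ) (h1 : s / B = t / B) (h2 : s % B = t % B) : s = t := by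
  rw [← Nat.div_add_mod s B, ← Nat.div_add_mod t B, h1, h2]

/-- Build a linear ordering from explicit endpoints. -/
theorem exists_linear (n d : ℕ) (a b : ℕ → ℕ)
    (ha : ∀ t < n.choose 2, a t < n) (hb : ∀ t < n.choose 2, b t < n)
    (hab : ∀ t < n.choose 2, a t ≠ b t)
    (hinj : ∀ s < n.choose 2, ∀ t < n.choose 2,
      (a s = a t ∧ b s = b t) ∨ (a s = b t ∧ b s = a t) → s = t)
    (hd : ∀ s < n.choose 2, ∀ t < n.choose 2, s < t → t < s + d →
      a s ≠ a t ∧ a s ≠ b t ∧ b s ≠ a t ∧ b s ≠ b t) :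
    ∃ f : Fin (edgeCount (⊤ : SimpleGraph (Fin n))) ≃ (⊤ : SimpleGraph (Fin n)).edgeSet,
      LinearGood _ f d := by
  classical
  have hN := edgeCount_top n
  have hlt : ∀ x : Fin (edgeCount (⊤ : SimpleGraph (Fin n))), (x : ℕ) < n.choose 2 :=
    fun x => hN ▸ x.2
  let g : Fin (edgeCount (⊤ : SimpleGraph (Fin n))) → (⊤ : SimpleGraph (Fin n)).edgeSet :=
    fun x => ⟨s(⟨a x, ha _ (hlt x)⟩, ⟨b x, hb _ (hlt x)⟩), by
      have := hab _ (hlt x)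
      simp [this]⟩
  have gi : Function.Injective g := by
    intro x y h
    have h' := congrArg Subtype.val h
    simp only [g, Sym2.eq_iff, Fin.mk.injEq] at h'
    exact Fin.ext (hinj _ (hlt x) _ (hlt y) h')
  have gb : Function.Bijective g := by
    rw [Fintype.bijective_iff_injective_and_card]
    refine ⟨gi, ?_⟩
    rw [Fintype.card_fin, edgeCount, Nat.card_eq_fintype_card]
  refine ⟨Equiv.ofBijective g gb, ?_⟩
  intro x y hxy h1 h2 v hv hv'
  simp only [Equiv.ofBijective_apply, g, Sym2.mem_iff, Fin.ext_iff] at hv hv'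
  have hne : (x : ℕ) ≠ y := fun h => hxy (Fin.ext h)
  rcases lt_or_gt_of_ne hne with h | h
  · have := hd _ (hlt x) _ (hlt y) h h2
    omega
  · have := hd _ (hlt y) _ (hlt x) h h1
    omega

/-- Build a cyclic ordering from explicit endpoints. -/
theorem exists_cyclic (n d : ℕ) (a b : ℕ → ℕ) (hn : 0 < n.choose 2) (hdn : d ≤ n.choose 2)
    (ha : ∀ t < n.choose 2, a t < n) (hb : ∀ t < n.choose 2, b t < n)
    (hab : ∀ t < n.choose 2, a t ≠ b t)
    (hinj : ∀ s < n.choose 2, ∀ t < n.choose 2,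
      (a s = a t ∧ b s = b t) ∨ (a s = b t ∧ b s = a t) → s = t)
    (hd : ∀ s < n.choose 2, ∀ t < n.choose 2,
      (s < t ∧ t < s + d) ∨ (t < s + n.choose 2 ∧ s + n.choose 2 < t + d) →
      a s ≠ a t ∧ a s ≠ b t ∧ b s ≠ a t ∧ b s ≠ b t) :
    ∃ f : ZMod (edgeCount (⊤ : SimpleGraph (Fin n))) ≃ (⊤ : SimpleGraph (Fin n)).edgeSet,
      CyclicGood _ f d := by
  classical
  have hN := edgeCount_top n
  have : NeZero (edgeCount (⊤ : SimpleGraph (Fin n))) := ⟨by omega⟩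
  have hlt : ∀ x : ZMod (edgeCount (⊤ : SimpleGraph (Fin n))), x.val < n.choose 2 :=
    fun x => hN ▸ x.val_lt
  let g : ZMod (edgeCount (⊤ : SimpleGraph (Fin n))) → (⊤ : SimpleGraph (Fin n)).edgeSet :=
    fun x => ⟨s(⟨a x.val, ha _ (hlt x)⟩, ⟨b x.val, hb _ (hlt x)⟩), by
      have := hab _ (hlt x)
      simp [this]⟩
  have gi : Function.Injective g := by
    intro x y h
    have h' := congrArg Subtype.val h
    simp only [g, Sym2.eq_iff, Fin.mk.injEq] at h'
    exact ZMod.val_injective _ (hinj _ (hlt x) _ (hlt y) h')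
  have gb : Function.Bijective g := by
    rw [Fintype.bijective_iff_injective_and_card]
    refine ⟨gi, ?_⟩
    rw [ZMod.card, edgeCount, Nat.card_eq_fintype_card]
  refine ⟨Equiv.ofBijective g gb, ?_⟩
  have key : ∀ (i : ZMod (edgeCount (⊤ : SimpleGraph (Fin n)))) (j k : ℕ), j < k → k < d →
      edgesDisjoint (g (i + (j : ZMod _)) : Sym2 (Fin n)) (g (i + (k : ZMod _))) := by
    intro i j k hjk hk v hv hv'
    simp only [g, Sym2.mem_iff, Fin.ext_iff] at hv hv'
    have e1 : (i + (k : ZMod (edgeCount (⊤ : SimpleGraph (Fin n))))) =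
        (i + (j : ZMod _)) + ((k - j : ℕ) : ZMod _) := by
      rw [add_assoc, ← Nat.cast_add, Nat.add_sub_cancel' hjk.le]
    rw [e1] at hv'
    generalize i + (j : ZMod (edgeCount (⊤ : SimpleGraph (Fin n)))) = x at hv hv'
    have e2 := ZMod.val_add x ((k - j : ℕ) : ZMod _)
    rw [ZMod.val_natCast, Nat.mod_eq_of_lt (a := k - j) (by omega)] at e2
    replace e2 := e2.trans (congrArg _ hN)
    generalize x + ((k - j : ℕ) : ZMod (edgeCount (⊤ : SimpleGraph (Fin n)))) = y at hv' e2
    have hx := hlt x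
    have hy := hlt y
    by_cases hc : x.val + (k - j) < n.choose 2
    · rw [Nat.mod_eq_of_lt hc] at e2
      have := hd _ hx _ hy (by omega)
      omega
    · rw [Nat.mod_eq_sub_mod (by omega), Nat.mod_eq_of_lt (by omega)] at e2
      have := hd _ hy _ hx (by omega)
      omega
  intro i j k hj hk hjk
  simp only [Equiv.ofBijective_apply]
  rcases lt_or_gt_of_ne hjk with h | h
  · exact key i j k h hk
  · intro v hv hv'
    exact key i k j h hj v hv' hv

/-! ### Constructions -/

theorem cyclic_odd (k : ℕ) (hk : 2 ≤ k) :
    ∃ f : ZMod (edgeCount (⊤ : SimpleGraph (Fin (2 * k + 1)))) ≃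
      (⊤ : SimpleGraph (Fin (2 * k + 1))).edgeSet, CyclicGood _ f (k - 1) := by
  have hc := choose_odd k
  have hm : ∀ t, t % k < k := fun t => Nat.mod_lt _ (by omega)
  have hq : ∀ t < k * (2 * k + 1), t / k < 2 * k + 1 := fun t ht => Nat.div_lt_of_lt_mul ht
  apply exists_cyclic (2 * k + 1) (k - 1)
    (fun t => if t / k + (t % k + 1) < 2 * k + 1 then t / k + (t % k + 1)
      else t / k + (t % k + 1) - (2 * k + 1))
    (fun t => if t % k + 1 ≤ t / k then t / k - (t % k + 1)
      else t / k + (2 * k + 1) - (t % k + 1))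
  · rw [hc]; positivity
  · rw [hc]; nlinarith [Nat.sub_le k 1]
  · intro t ht
    have := hq t (hc ▸ ht); have := hm t
    split_ifs <;> omega
  · intro t ht
    have := hq t (hc ▸ ht); have := hm t
    split_ifs <;> omega
  · intro t ht
    have := hq t (hc ▸ ht); have := hm t
    split_ifs <;> omega
  · intro s hs t ht h
    have h1 := hq t (hc ▸ ht); have h2 := hm t
    have h3 := hq s (hc ▸ hs); have h4 := hm s
    suffices s / k = t / k ∧ s % k = t % k from div_mod_ext k s t this.1 this.2
    generalize s / k = x at *
    generalize t / k = y at *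
    generalize s % k = z at *
    generalize t % k = w at *
    clear hs ht hq hm hc
    split_ifs at h <;> omega
  · intro s hs t ht h
    have h1 := hq t (hc ▸ ht); have h2 := hm t
    have h3 := hq s (hc ▸ hs); have h4 := hm s
    have h5 : (t / k = s / k ∧ t % k ≠ s % k) ∨ (t / k = s / k + 1 ∧ s % k ≤ t % k + k ∧
        t % k + 1 < s % k) ∨ (s / k = 0 ∧ t / k = 2 * k ∧ s % k + 1 < t % k) := by
      rcases h with ⟨h, h'⟩ | ⟨h, h'⟩
      · rcases near_div k s t h (by omega) with h | h <;> omega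
      · have e1 : (s + k * (2 * k + 1)) / k = s / k + (2 * k + 1) :=
          Nat.add_mul_div_left _ _ (by omega)
        have e2 : (s + k * (2 * k + 1)) % k = s % k := Nat.add_mul_mod_self_left _ _ _
        have := near_div k t (s + (2 * k + 1).choose 2) h (by omega)
        rw [hc] at this h h'
        rw [e1, e2] at this
        clear e1 e2
        generalize k * (2 * k + 1) = M at *
        clear hs ht hq hm
        generalize s / k = x at *
        generalize t / k = y at *
        generalize s % k = z at *
        generalize t % k = w at *
        omega
    clear h hs ht hq hm hc
    generalize s / k = x at *
    generalize t / k = y at *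
    generalize s % k = z at *
    generalize t % k = w at *
    split_ifs <;> omega

theorem cyclic_even (k : ℕ) (hk : 1 ≤ k) :
    ∃ f : ZMod (edgeCount (⊤ : SimpleGraph (Fin (2 * (k + 1))))) ≃
      (⊤ : SimpleGraph (Fin (2 * (k + 1)))).edgeSet, CyclicGood _ f k := by
  have hc := choose_even k
  have hm : ∀ t, t % (k + 1) < k + 1 := fun t => Nat.mod_lt _ (by omega)
  have hq : ∀ t < (k + 1) * (2 * k + 1), t / (k + 1) < 2 * k + 1 :=
    fun t ht => Nat.div_lt_of_lt_mul ht
  apply exists_cyclic (2 * (k + 1)) k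
    (fun t => if t % (k + 1) = 0 then 2 * k + 1 else
      if t / (k + 1) + t % (k + 1) < 2 * k + 1 then t / (k + 1) + t % (k + 1)
      else t / (k + 1) + t % (k + 1) - (2 * k + 1))
    (fun t => if t % (k + 1) ≤ t / (k + 1) then t / (k + 1) - t % (k + 1)
      else t / (k + 1) + (2 * k + 1) - t % (k + 1))
  · rw [hc]; positivity
  · rw [hc]; nlinarith
  · intro t ht
    have := hq t (hc ▸ ht); have := hm t
    split_ifs <;> omega
  · intro t ht
    have := hq t (hc ▸ ht); have := hm t
    split_ifs <;> omega
  · intro t ht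
    have := hq t (hc ▸ ht); have := hm t
    split_ifs <;> omega
  · intro s hs t ht h
    have h1 := hq t (hc ▸ ht); have h2 := hm t
    have h3 := hq s (hc ▸ hs); have h4 := hm s
    suffices s / (k + 1) = t / (k + 1) ∧ s % (k + 1) = t % (k + 1) from
      div_mod_ext (k + 1) s t this.1 this.2
    generalize s / (k + 1) = x at *
    generalize t / (k + 1) = y at *
    generalize s % (k + 1) = z at *
    generalize t % (k + 1) = w at *
    clear hs ht hq hm hc
    split_ifs at h <;> omega
  · intro s hs t ht h
    have h1 := hq t (hc ▸ ht); have h2 := hm t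
    have h3 := hq s (hc ▸ hs); have h4 := hm s
    have h5 : (t / (k + 1) = s / (k + 1) ∧ t % (k + 1) ≠ s % (k + 1)) ∨
        (t / (k + 1) = s / (k + 1) + 1 ∧ t % (k + 1) + 1 < s % (k + 1)) ∨
        (s / (k + 1) = 0 ∧ t / (k + 1) = 2 * k ∧ s % (k + 1) + 1 < t % (k + 1)) := by
      rcases h with ⟨h, h'⟩ | ⟨h, h'⟩
      · rcases near_div (k + 1) s t h (by omega) with h | h <;> omega
      · have e1 : (s + (k + 1) * (2 * k + 1)) / (k + 1) = s / (k + 1) + (2 * k + 1) :=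
          Nat.add_mul_div_left _ _ (by omega)
        have e2 : (s + (k + 1) * (2 * k + 1)) % (k + 1) = s % (k + 1) :=
          Nat.add_mul_mod_self_left _ _ _
        have := near_div (k + 1) t (s + (2 * (k + 1)).choose 2) h (by omega)
        rw [hc] at this h h'
        rw [e1, e2] at this
        clear e1 e2
        generalize (k + 1) * (2 * k + 1) = M at *
        clear hs ht hq hm
        generalize s / (k + 1) = x at *
        generalize t / (k + 1) = y at *
        generalize s % (k + 1) = z at *
        generalize t % (k + 1) = w at *
        omega
    clear h hs ht hq hm hc
    generalize s / (k + 1) = x at *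
    generalize t / (k + 1) = y at *
    generalize s % (k + 1) = z at *
    generalize t % (k + 1) = w at *
    split_ifs <;> omega

/-- First endpoint in the Walecki ordering: block `c`, place `r`. -/
def walA (k c r : ℕ) : ℕ :=
  if r = 0 then 2 * k else if r ≤ k then c + r
  else if r - (k + 1) ≤ c then c - (r - (k + 1)) else c + 2 * k - (r - (k + 1))

/-- Second endpoint in the Walecki ordering. -/
def walB (k c r : ℕ) : ℕ :=
  if r = k then 2 * k else if r < k then (if r ≤ c then c - r else c + 2 * k - r)
  else c + (r - k)

theorem wal_spec (k c r : ℕ) (hk : 2 ≤ k) (hc : c < k) (hr : r < 2 * k + 1) :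
    (r = 0 ∧ walA k c r = 2 * k ∧ walB k c r = c) ∨
    (0 < r ∧ r < k ∧ walA k c r = c + r ∧ walB k c r < 2 * k ∧
      (walB k c r + r = c ∨ walB k c r + r = c + 2 * k)) ∨
    (r = k ∧ walA k c r = c + k ∧ walB k c r = 2 * k) ∨
    (k < r ∧ walB k c r + k = c + r ∧ walA k c r < 2 * k ∧
      (walA k c r + r = c + k + 1 ∨ walA k c r + r = c + 3 * k + 1)) := by
  unfold walA walB
  split_ifs <;> omega

theorem linear_odd (k : ℕ) (hk : 2 ≤ k) :
    ∃ f : Fin (edgeCount (⊤ : SimpleGraph (Fin (2 * k + 1)))) ≃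
      (⊤ : SimpleGraph (Fin (2 * k + 1))).edgeSet, LinearGood _ f k := by
  have hc := choose_odd k
  have hm : ∀ t, t % (2 * k + 1) < 2 * k + 1 := fun t => Nat.mod_lt _ (by omega)
  have hq : ∀ t < k * (2 * k + 1), t / (2 * k + 1) < k :=
    fun t ht => Nat.div_lt_of_lt_mul (by rwa [mul_comm])
  apply exists_linear (2 * k + 1) k
    (fun t => walA k (t / (2 * k + 1)) (t % (2 * k + 1)))
    (fun t => walB k (t / (2 * k + 1)) (t % (2 * k + 1)))
  · intro t ht
    have h := wal_spec k _ _ hk (hq t (hc ▸ ht)) (hm t)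
    have h1 := hq t (hc ▸ ht)
    have h2 := hm t
    generalize t / (2 * k + 1) = x at *
    generalize t % (2 * k + 1) = y at *
    omega
  · intro t ht
    have h := wal_spec k _ _ hk (hq t (hc ▸ ht)) (hm t)
    have h1 := hq t (hc ▸ ht)
    have h2 := hm t
    generalize t / (2 * k + 1) = x at *
    generalize t % (2 * k + 1) = y at *
    omega
  · intro t ht
    have h := wal_spec k _ _ hk (hq t (hc ▸ ht)) (hm t)
    have h1 := hq t (hc ▸ ht)
    have h2 := hm t
    generalize t / (2 * k + 1) = x at *
    generalize t % (2 * k + 1) = y at *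
    clear ht hq hm hc
    intro hh
    rw [← hh] at h
    generalize walA k x y = a at *
    clear hh
    rcases h with h | ⟨_, _, _, _, h | h⟩ | h | ⟨_, _, _, h | h⟩ <;> omega
  · intro s hs t ht h
    have h1 := hq t (hc ▸ ht); have h2 := hm t
    have h3 := hq s (hc ▸ hs); have h4 := hm s
    have hS := wal_spec k _ _ hk h3 h4
    have hT := wal_spec k _ _ hk h1 h2
    suffices s / (2 * k + 1) = t / (2 * k + 1) ∧ s % (2 * k + 1) = t % (2 * k + 1) from
      div_mod_ext (2 * k + 1) s t this.1 this.2
    generalize s / (2 * k + 1) = x at *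
    generalize t / (2 * k + 1) = y at *
    generalize s % (2 * k + 1) = z at *
    generalize t % (2 * k + 1) = w at *
    clear hs ht hq hm hc
    generalize walA k x z = a1 at *
    generalize walB k x z = b1 at *
    generalize walA k y w = a2 at *
    generalize walB k y w = b2 at *
    rcases hS with hS | hS | hS | hS <;> rcases hT with hT | hT | hT | hT <;>
      rcases h with h | h <;> omega
  · intro s hs t ht h h'
    have h1 := hq t (hc ▸ ht); have h2 := hm t
    have h3 := hq s (hc ▸ hs); have h4 := hm s
    have hS := wal_spec k _ _ hk h3 h4
    have hT := wal_spec k _ _ hk h1 h2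
    have h5 := near_div (2 * k + 1) s t h (by omega)
    have h6 : (t / (2 * k + 1) = s / (2 * k + 1) ∧ s % (2 * k + 1) < t % (2 * k + 1) ∧
        t % (2 * k + 1) < s % (2 * k + 1) + k) ∨ (t / (2 * k + 1) = s / (2 * k + 1) + 1 ∧
        t % (2 * k + 1) + (k + 1) < s % (2 * k + 1)) := by omega
    clear h h' hs ht hq hm hc h5
    generalize s / (2 * k + 1) = x at *
    generalize t / (2 * k + 1) = y at *
    generalize s % (2 * k + 1) = z at *
    generalize t % (2 * k + 1) = w at *
    generalize walA k x z = a1 at *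
    generalize walB k x z = b1 at *
    generalize walA k y w = a2 at *
    generalize walB k y w = b2 at *
    rcases hS with hS | hS | hS | hS <;> rcases hT with hT | hT | hT | hT <;>
      rcases h6 with h6 | h6 <;> omega

/-! ### Upper bounds -/

/-- If `k` consecutive edges, at both offsets, live in a set of at most `2k` vertices, then the
first edge returns after `k` steps. -/
theorem core_eq {V : Type*} [DecidableEq V] (k : ℕ) (hk : 1 ≤ k) (T : Finset V)
    (hT : T.card ≤ 2 * k) (E : ℕ → Finset V) (hcard : ∀ i ≤ k, (E i).card = 2)
    (hsub : ∀ i ≤ k, E i ⊆ T)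
    (hdis : ∀ i j, i < j → j ≤ k → j < i + k → Disjoint (E i) (E j)) : E 0 = E k := by
  set U := (Finset.Ico 1 k).biUnion E with hU
  have hUc : U.card = 2 * (k - 1) := by
    rw [hU, Finset.card_biUnion]
    · rw [Finset.sum_congr rfl (fun i hi => hcard i (by simp at hi; omega))]
      simp; ring
    · intro i hi j hj hij
      simp at hi hj
      rcases lt_or_gt_of_ne hij with h | h
      · exact hdis i j h (by omega) (by omega)
      · exact (hdis j i h (by omega) (by omega)).symm
  have hUT : U ⊆ T := by
    intro x hx
    simp only [hU, Finset.mem_biUnion, Finset.mem_Ico] at hx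
    obtain ⟨i, hi, hx⟩ := hx
    exact hsub i (by omega) hx
  have hc : (T \ U).card ≤ 2 := by
    rw [Finset.card_sdiff_of_subset hUT]; omega
  have key : ∀ i ≤ k, (∀ j, 1 ≤ j → j < k → Disjoint (E i) (E j)) → E i = T \ U := by
    intro i hi h
    apply Finset.eq_of_subset_of_card_le
    · rw [Finset.subset_sdiff]
      refine ⟨hsub i hi, ?_⟩
      rw [hU, Finset.disjoint_biUnion_right]
      intro j hj
      simp at hj
      exact h j hj.1 hj.2
    · rw [hcard i hi]; exact hc
  rw [key 0 (by omega) (fun j h1 h2 => hdis 0 j (by omega) (by omega) (by omega)),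
    key k le_rfl (fun j h1 h2 => (hdis j k h2 le_rfl (by omega)).symm)]

/-- The set of endpoints of an edge of a complete graph. -/
theorem card_edge {n : ℕ} (e : (⊤ : SimpleGraph (Fin n)).edgeSet) :
    (e : Sym2 (Fin n)).toFinset.card = 2 := by
  apply Sym2.card_toFinset_of_not_isDiag
  exact SimpleGraph.not_isDiag_of_mem_edgeSet _ e.2

theorem edgesDisjoint_iff {n : ℕ} (e e' : Sym2 (Fin n)) :
    edgesDisjoint e e' ↔ Disjoint e.toFinset e'.toFinset := by
  rw [Finset.disjoint_left]
  simp [edgesDisjoint]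

theorem toFinset_inj {n : ℕ} (e e' : (⊤ : SimpleGraph (Fin n)).edgeSet)
    (h : (e : Sym2 (Fin n)).toFinset = (e' : Sym2 (Fin n)).toFinset) : e = e' := by
  apply Subtype.ext
  apply Sym2.ext
  intro x
  rw [← Sym2.mem_toFinset, h, Sym2.mem_toFinset]

theorem linear_upper (n K d : ℕ) (hK : 1 ≤ K) (hn : n ≤ 2 * K) (hm : K < n.choose 2)
    (f : Fin (edgeCount (⊤ : SimpleGraph (Fin n))) ≃ (⊤ : SimpleGraph (Fin n)).edgeSet)
    (hf : LinearGood _ f d) : d < K := by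
  by_contra hd
  have hN := edgeCount_top n
  have hpos : 0 < edgeCount (⊤ : SimpleGraph (Fin n)) := by omega
  have := core_eq K hK (Finset.univ : Finset (Fin n)) (by simpa using hn)
    (fun i => (f ⟨i % edgeCount (⊤ : SimpleGraph (Fin n)), Nat.mod_lt _ hpos⟩ :
      Sym2 (Fin n)).toFinset)
    (fun i _ => card_edge _) (fun i _ => Finset.subset_univ _) (by
      intro i j h1 h2 h3
      rw [← edgesDisjoint_iff]
      have e1 : i % edgeCount (⊤ : SimpleGraph (Fin n)) = i := Nat.mod_eq_of_lt (by omega)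
      have e2 : j % edgeCount (⊤ : SimpleGraph (Fin n)) = j := Nat.mod_eq_of_lt (by omega)
      apply hf
      · intro h
        have := congrArg Fin.val h
        simp only [e1, e2] at this
        omega
      · simp only [e1, e2]; omega
      · simp only [e1, e2]; omega)
  have h2 := congrArg Fin.val (f.injective (toFinset_inj _ _ this))
  simp only [Nat.zero_mod] at h2
  rw [Nat.mod_eq_of_lt (by omega)] at h2
  omega

theorem cyclic_good_dist {n d : ℕ}
    (f : ZMod (edgeCount (⊤ : SimpleGraph (Fin n))) ≃ (⊤ : SimpleGraph (Fin n)).edgeSet)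
    (hf : CyclicGood _ f d) (i j : ℤ) (h1 : i < j) (h2 : j < i + d) :
    Disjoint (f (i : ZMod _) : Sym2 (Fin n)).toFinset (f (j : ZMod _) : Sym2 (Fin n)).toFinset := by
  rw [← edgesDisjoint_iff]
  have := hf (i : ZMod _) 0 (j - i).toNat (by omega) (by omega) (by omega)
  have e : (((j - i).toNat : ℕ) : ZMod (edgeCount (⊤ : SimpleGraph (Fin n)))) =
      ((j - i : ℤ) : ZMod _) := by
    rw [← Int.cast_natCast, Int.toNat_of_nonneg (by omega)]
  rw [e] at this
  simpa using this

theorem cyclic_upper (n K d : ℕ) (hK : 1 ≤ K) (hn : n ≤ 2 * K) (hm : K < n.choose 2)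
    (f : ZMod (edgeCount (⊤ : SimpleGraph (Fin n))) ≃ (⊤ : SimpleGraph (Fin n)).edgeSet)
    (hf : CyclicGood _ f d) : d < K := by
  by_contra hd
  have hN := edgeCount_top n
  have := core_eq K hK (Finset.univ : Finset (Fin n)) (by simpa using hn)
    (fun i => (f ((i : ℤ) : ZMod _) : Sym2 (Fin n)).toFinset)
    (fun i _ => card_edge _) (fun i _ => Finset.subset_univ _) (by
      intro i j h1 h2 h3
      exact cyclic_good_dist f hf _ _ (by omega) (by omega))
  have h2 := f.injective (toFinset_inj _ _ this)
  rw [ZMod.intCast_eq_intCast_iff_dvd_sub] at h2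
  have h3 := Int.le_of_dvd (by omega) h2
  omega

/-- The combinatorial heart of the odd cyclic upper bound. -/
theorem odd_core {V : Type*} [Fintype V] [DecidableEq V] (k : ℕ) (hk : 2 ≤ k)
    (hV : Fintype.card V = 2 * k + 1) (m : ℕ) (hm : 2 * k + 1 < m) (E : ℤ → Finset V)
    (hcard : ∀ i, (E i).card = 2) (hinj : ∀ i j : ℤ, i < j → j < i + m → E i ≠ E j)
    (hper : ∀ i, E (i + m) = E i)
    (hdis : ∀ i j : ℤ, i < j → j < i + k → Disjoint (E i) (E j))
    (D : ℕ) (hdeg : ∀ v i, ((Finset.range m).filter (fun t : ℕ => v ∈ E (i + t))).card = D) :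
    False := by
  -- disjointness for elements
  have F1 : ∀ (v : V) (i j : ℤ), i < j → j < i + k → v ∈ E i → v ∉ E j := fun v i j h1 h2 h3 h4 =>
    Finset.disjoint_left.1 (hdis i j h1 h2) h3 h4
  -- every vertex is in any `k+1` consecutive edges
  have F2 : ∀ (v : V) (i : ℤ), ∃ j, i ≤ j ∧ j ≤ i + k ∧ v ∈ E j := by
    intro v i
    by_contra! h
    have := core_eq k (by omega) (Finset.univ.erase v) (by simp [hV])
      (fun t => E (i + t)) (fun t _ => hcard _)
      (fun t ht x hx => by
        simp only [Finset.mem_erase, Finset.mem_univ, and_true]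
        rintro rfl
        exact h (i + t) (by omega) (by omega) hx)
      (fun s t h1 h2 h3 => hdis _ _ (by omega) (by omega))
    exact hinj i (i + k) (by omega) (by omega) (by simpa using this)
  have pair : ∀ u v i, u ≠ v → u ∈ E i → v ∈ E i → E i = {u, v} := by
    intro u v i huv hu hv
    symm
    apply Finset.eq_of_subset_of_card_le
    · intro x hx
      simp at hx
      rcases hx with rfl | rfl <;> assumption
    · rw [hcard, Finset.card_pair huv]
  have meet : ∀ (u v : V) (i j : ℤ), u ≠ v → i < j → j < i + m → u ∈ E i → v ∈ E i → u ∈ E j → v ∉ E j := by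
    intro u v i j huv h1 h2 a b c d
    exact hinj i j h1 h2 (by rw [pair u v i huv a b, pair u v j huv c d])
  -- one of the two endpoints returns after exactly `k` steps
  have back : ∀ u v i, u ≠ v → u ∈ E i → v ∈ E i → v ∉ E (i + k) → u ∈ E (i + k) := by
    intro u v i huv hu hv hnv
    by_contra hnu
    -- both absent from `i+1 .. i+k`, so too few vertices remain
    set U := (Finset.Icc (i + 1) (i + k)).biUnion E with hU
    have hUc : U.card = 2 * k := by
      rw [hU, Finset.card_biUnion]
      · simp [hcard]; ring
      · intro a ha b hb hab
        simp at ha hb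
        rcases lt_or_gt_of_ne hab with h | h
        · exact hdis a b h (by omega)
        · exact (hdis b a h (by omega)).symm
    have hsub : U ⊆ (Finset.univ.erase u).erase v := by
      intro x hx
      simp only [hU, Finset.mem_biUnion, Finset.mem_Icc] at hx
      obtain ⟨j, hj, hx⟩ := hx
      simp only [Finset.mem_erase, Finset.mem_univ, and_true]
      rcases (by omega : j < i + k ∨ j = i + k) with h | rfl
      · constructor
        · rintro rfl; exact F1 x i j (by omega) h hv hx
        · rintro rfl; exact F1 x i j (by omega) h hu hx
      · constructor
        · rintro rfl; exact hnv hx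
        · rintro rfl; exact hnu hx
    have := Finset.card_le_card hsub
    rw [Finset.card_erase_of_mem (by simp [huv.symm]), Finset.card_erase_of_mem (by simp),
      Finset.card_univ] at this
    omega
  -- the alternation argument
  have alt : ∀ u i, u ∈ E i → u ∈ E (i + k) → u ∉ E (i - k) := by
    intro u i hu huk hub
    obtain ⟨v, hvu, hv⟩ : ∃ v, u ≠ v ∧ v ∈ E i := by
      obtain ⟨v, hv, h⟩ := Finset.exists_mem_ne (by rw [hcard i]; norm_num) u
      exact ⟨v, h.symm, hv⟩
    let c : V → ℕ → ℕ := fun w j => ((Finset.range j).filter (fun t : ℕ => w ∈ E (i + t))).card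
    have csucc : ∀ w j, c w (j + 1) = c w j + if w ∈ E (i + (j : ℕ)) then 1 else 0 := by
      intro w j
      simp only [c, Finset.range_add_one, Finset.filter_insert]
      split_ifs with h
      · rw [Finset.card_insert_of_notMem (by simp)]
      · simp
    have c0 : ∀ w, w ∈ E i → ∀ j, 1 ≤ j → j ≤ k → c w j = 1 := by
      intro w hw j hj
      induction j, hj using Nat.le_induction with
      | base => intro _; rw [csucc]; simp [c, hw]
      | succ j hj ih =>
        intro h
        rw [csucc, ih (by omega), if_neg (F1 w i (i + j) (by omega) (by omega) hw)]
    have P : ∀ j, k + 1 ≤ j → j ≤ m →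
        (c u j = c v j + 1 ∧ ∃ p : ℕ, p < j ∧ u ∈ E (i + p) ∧
          ∀ t : ℕ, p ≤ t → t < j → v ∉ E (i + t)) ∨
        (c u j = c v j ∧ ∃ p : ℕ, p < j ∧ v ∈ E (i + p) ∧
          ∀ t : ℕ, p ≤ t → t < j → u ∉ E (i + t)) := by
      intro j hj
      induction j, hj using Nat.le_induction with
      | base =>
        intro _
        have hnv : v ∉ E (i + k) := meet u v i (i + k) hvu (by omega) (by omega) hu hv huk
        left
        refine ⟨?_, k, by omega, huk, ?_⟩
        · rw [csucc, csucc, c0 u hu k (by omega) le_rfl, c0 v hv k (by omega) le_rfl,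
            if_pos huk, if_neg hnv]
        · intro t h1 h2
          obtain rfl : t = k := by omega
          exact hnv
      | succ j hj ih =>
        intro hjm
        rw [csucc, csucc]
        have hno := meet u v i (i + j) hvu (by omega) (by omega) hu hv
        rcases ih (by omega) with ⟨h1, p, hp, hpu, hpv⟩ | ⟨h1, p, hp, hpv, hpu⟩
        · by_cases hju : u ∈ E (i + j)
          · exfalso
            obtain ⟨q, hq1, hq2, hq⟩ := F2 v (i + p)
            have hgap : p + k ≤ j := by
              by_contra hlt
              exact F1 u (i + p) (i + j) (by omega) (by omega) hpu hju
            obtain ⟨q', rfl⟩ : ∃ q' : ℕ, q = i + q' := ⟨(q - i).toNat, by omega⟩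
            rcases (by omega : q' < j ∨ q' = j) with h | rfl
            · exact hpv q' (by omega) h hq
            · exact hno hju hq
          · by_cases hjv : v ∈ E (i + j)
            · right
              refine ⟨by simp [hju, hjv, h1], j, by omega, hjv, ?_⟩
              intro t h2 h3
              obtain rfl : t = j := by omega
              exact hju
            · left
              refine ⟨by simp [hju, hjv, h1], p, by omega, hpu, ?_⟩
              intro t h2 h3
              rcases (by omega : t < j ∨ t = j) with h | rfl
              · exact hpv t h2 h
              · exact hjv
        · by_cases hjv : v ∈ E (i + j)
          · exfalso
            obtain ⟨q, hq1, hq2, hq⟩ := F2 u (i + p)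
            have hgap : p + k ≤ j := by
              by_contra hlt
              exact F1 v (i + p) (i + j) (by omega) (by omega) hpv hjv
            obtain ⟨q', rfl⟩ : ∃ q' : ℕ, q = i + q' := ⟨(q - i).toNat, by omega⟩
            rcases (by omega : q' < j ∨ q' = j) with h | rfl
            · exact hpu q' (by omega) h hq
            · exact hno hq hjv
          · by_cases hju : u ∈ E (i + j)
            · left
              refine ⟨by simp [hju, hjv, h1], j, by omega, hju, ?_⟩
              intro t h2 h3
              obtain rfl : t = j := by omega
              exact hjv
            · right
              refine ⟨by simp [hju, hjv, h1], p, by omega, hpv, ?_⟩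
              intro t h2 h3
              rcases (by omega : t < j ∨ t = j) with h | rfl
              · exact hpu t h2 h
              · exact hju
    have hcu : c u m = D := hdeg u i
    have hcv : c v m = D := hdeg v i
    rcases P m (by omega) le_rfl with ⟨h1, _⟩ | ⟨_, p, hp, hpv, hpu⟩
    · omega
    · have hu' : u ∈ E (i + (m - k : ℕ)) := by
        rw [← hper] at hub
        have e : i - k + m = i + (m - k : ℕ) := by omega
        rwa [e] at hub
      have hpm : m - k < p := by
        by_contra hlt
        exact hpu (m - k) (by omega) (by omega) hu'
      exact F1 v (i + p) (i + m) (by omega) (by omega) hpv (by rw [hper]; exact hv)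
  -- conclusion: `E 0 = E (2k+1)`
  have other : ∀ u i, u ∈ E i → ∃ v, u ≠ v ∧ v ∈ E i := by
    intro u i _
    obtain ⟨v, hv, h⟩ := Finset.exists_mem_ne (by rw [hcard i]; norm_num) u
    exact ⟨v, h.symm, hv⟩
  obtain ⟨u, v, huv, hu, hv, huk⟩ : ∃ u v, u ≠ v ∧ u ∈ E 0 ∧ v ∈ E 0 ∧ u ∈ E k := by
    obtain ⟨u, hu⟩ := Finset.card_pos.1 (by rw [hcard 0]; norm_num)
    obtain ⟨v, huv, hv⟩ := other u 0 hu
    by_cases h : v ∈ E k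
    · exact ⟨v, u, huv.symm, hv, hu, h⟩
    · exact ⟨u, v, huv, hu, hv, by simpa using back u v 0 huv hu hv (by simpa using h)⟩
  have hvk : v ∉ E k := meet u v 0 k huv (by omega) (by omega) hu hv huk
  have hvk1 : v ∈ E (k + 1) := by
    obtain ⟨j, h1, h2, h3⟩ := F2 v 1
    rcases (by omega : j < k ∨ j = k ∨ j = k + 1) with h | rfl | rfl
    · exact absurd h3 (F1 v 0 j (by omega) (by omega) hv)
    · exact absurd h3 hvk
    · exact h3
  have hu2 : u ∉ E (2 * k) := by
    intro h
    exact alt u k huk (by rwa [show (k : ℤ) + k = 2 * k by ring]) (by simpa using hu)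
  have hu3 : u ∈ E (2 * k + 1) := by
    obtain ⟨j, h1, h2, h3⟩ := F2 u (k + 1)
    rcases (by omega : j < 2 * k ∨ j = 2 * k ∨ j = 2 * k + 1) with h | rfl | rfl
    · exact absurd h3 (F1 u k j (by omega) (by omega) huk)
    · exact absurd h3 hu2
    · exact h3
  obtain ⟨w, hvw, hw⟩ := other v (k + 1) hvk1
  have hw1 : w ∈ E 1 := by
    -- otherwise neither endpoint of `E (k+1)` is in `E 1`
    have hv1 : v ∉ E 1 := F1 v 0 1 (by omega) (by omega) hv
    obtain ⟨x, hx⟩ := Finset.card_pos.1 (by rw [hcard 1]; norm_num : 0 < (E 1).card)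
    obtain ⟨y, hxy, hy⟩ := other x 1 hx
    have e : (1 : ℤ) + k = k + 1 := by ring
    have hE : ∀ z, z ∈ E (k + 1) → z = v ∨ z = w := by
      intro z hz
      rw [pair v w _ hvw hvk1 hw] at hz
      simpa using hz
    by_cases hyk : y ∈ E (k + 1)
    · rcases hE y hyk with rfl | rfl
      · exact absurd hy hv1
      · exact hy
    · have hxk := back x y 1 hxy hx hy (by rwa [e])
      rw [e] at hxk
      rcases hE x hxk with rfl | rfl
      · exact absurd hx hv1
      · exact hx
  have hw2 : w ∉ E (2 * k + 1) := by
    intro h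
    exact alt w (k + 1) hw (by rwa [show (k : ℤ) + 1 + k = 2 * k + 1 by ring])
      (by simpa using hw1)
  have hv2 : v ∈ E (2 * k + 1) := by
    have := back v w (k + 1) hvw hvk1 hw (by rwa [show (k : ℤ) + 1 + k = 2 * k + 1 by ring])
    rwa [show (k : ℤ) + 1 + k = 2 * k + 1 by ring] at this
  exact meet u v 0 (2 * k + 1) huv (by omega) (by omega) hu hv hu3 hv2

theorem cyclic_odd_upper (k d : ℕ) (hk : 2 ≤ k)
    (f : ZMod (edgeCount (⊤ : SimpleGraph (Fin (2 * k + 1)))) ≃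
      (⊤ : SimpleGraph (Fin (2 * k + 1))).edgeSet)
    (hf : CyclicGood _ f d) : d < k := by
  classical
  by_contra hd
  have hN := edgeCount_top (2 * k + 1)
  have hc := choose_odd k
  have hbig : 2 * k + 1 < edgeCount (⊤ : SimpleGraph (Fin (2 * k + 1))) := by
    rw [hN, hc]; nlinarith
  have : NeZero (edgeCount (⊤ : SimpleGraph (Fin (2 * k + 1)))) := ⟨by omega⟩
  refine odd_core (V := Fin (2 * k + 1)) k hk (by simp)
    (edgeCount (⊤ : SimpleGraph (Fin (2 * k + 1)))) hbig
    (fun i : ℤ => (f (i : ZMod _) : Sym2 (Fin (2 * k + 1))).toFinset)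
    (fun i => card_edge _) ?_ ?_ ?_ (2 * k) ?_
  · intro i j h1 h2 h
    have h2 := f.injective (toFinset_inj _ _ h)
    rw [ZMod.intCast_eq_intCast_iff_dvd_sub] at h2
    have h3 := Int.le_of_dvd (by omega) h2
    omega
  · intro i
    simp
  · intro i j h1 h2
    exact cyclic_good_dist f hf _ _ h1 (by omega)
  · intro v i
    have hdeg : ((⊤ : SimpleGraph (Fin (2 * k + 1))).incidenceFinset v).card = 2 * k := by
      rw [SimpleGraph.card_incidenceFinset_eq_degree]; simp
    refine Eq.trans ?_ hdeg
    refine Finset.card_bij (fun t _ => (f ((i + (t : ℤ) : ℤ) : ZMod _) : Sym2 (Fin (2 * k + 1))))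
      ?_ ?_ ?_
    · intro t ht
      simp only [Finset.mem_filter, Sym2.mem_toFinset] at ht
      rw [SimpleGraph.mem_incidenceFinset]
      exact ⟨(f _).2, ht.2⟩
    · intro s hs t ht h
      simp only [Finset.mem_filter, Finset.mem_range] at hs ht
      have h2 := f.injective (Subtype.ext h)
      rw [ZMod.intCast_eq_intCast_iff_dvd_sub] at h2
      obtain ⟨q, hq⟩ := h2
      have h3 := Int.eq_zero_of_abs_lt_dvd ⟨q, hq⟩ (by rw [abs_lt]; omega)
      omega
    · intro e he
      rw [SimpleGraph.mem_incidenceFinset] at he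
      obtain ⟨x, hx⟩ := f.surjective ⟨e, he.1⟩
      have hxx : ((i + (((x - (i : ZMod _)).val : ℕ) : ℤ) : ℤ) :
          ZMod (edgeCount (⊤ : SimpleGraph (Fin (2 * k + 1))))) = x := by
        push_cast
        rw [ZMod.natCast_zmod_val]; ring
      refine ⟨(x - (i : ZMod _)).val, ?_, ?_⟩
      · simp only [Finset.mem_filter, Finset.mem_range, Sym2.mem_toFinset]
        refine ⟨ZMod.val_lt _, ?_⟩
        rw [hxx, hx]; exact he.2
      · rw [hxx, hx]

/-! ### Values -/

theorem ms_odd (k : ℕ) (hk : 2 ≤ k) : ms (⊤ : SimpleGraph (Fin (2 * k + 1))) = k := by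
  have hc := choose_odd k
  have hN := edgeCount_top (2 * k + 1)
  apply IsGreatest.csSup_eq
  refine ⟨⟨?_, linear_odd k hk⟩, ?_⟩
  · rw [hN, hc]; nlinarith
  · rintro d ⟨_, f, hf⟩
    have := linear_upper (2 * k + 1) (k + 1) d (by omega) (by omega) (by rw [hc]; nlinarith) f hf
    omega

theorem cms_odd (k : ℕ) (hk : 2 ≤ k) : cms (⊤ : SimpleGraph (Fin (2 * k + 1))) = k - 1 := by
  apply IsGreatest.csSup_eq
  refine ⟨cyclic_odd k hk, ?_⟩
  rintro d ⟨f, hf⟩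
  have := cyclic_odd_upper k d hk f hf
  omega

theorem cms_even (k : ℕ) (hk : 1 ≤ k) : cms (⊤ : SimpleGraph (Fin (2 * (k + 1)))) = k := by
  have hc := choose_even k
  apply IsGreatest.csSup_eq
  refine ⟨cyclic_even k hk, ?_⟩
  rintro d ⟨f, hf⟩
  have := cyclic_upper (2 * (k + 1)) (k + 1) d (by omega) (by omega) (by rw [hc]; nlinarith) f hf
  omega

theorem finEquiv_val (N : ℕ) [NeZero N] (x : Fin N) :
    ZMod.finEquiv N x = (((x : ℕ) : ℤ) : ZMod N) := by
  cases N with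
  | zero => exact x.elim0
  | succ N =>
    rw [Int.cast_natCast]
    exact (ZMod.natCast_zmod_val (n := N + 1) x).symm

/-- A cyclic ordering read linearly. -/
theorem linear_of_cyclic (n d : ℕ) (hn : 0 < n.choose 2)
    (h : ∃ f : ZMod (edgeCount (⊤ : SimpleGraph (Fin n))) ≃ (⊤ : SimpleGraph (Fin n)).edgeSet,
      CyclicGood _ f d) :
    ∃ f : Fin (edgeCount (⊤ : SimpleGraph (Fin n))) ≃ (⊤ : SimpleGraph (Fin n)).edgeSet,
      LinearGood _ f d := by
  obtain ⟨f, hf⟩ := h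
  have hN := edgeCount_top n
  have : NeZero (edgeCount (⊤ : SimpleGraph (Fin n))) := ⟨by omega⟩
  refine ⟨(ZMod.finEquiv _).toEquiv.trans f, ?_⟩
  have e : ∀ x : Fin (edgeCount (⊤ : SimpleGraph (Fin n))),
      ZMod.finEquiv _ x = (((x : ℕ) : ℤ) : ZMod _) := by
    exact fun x => finEquiv_val _ x
  intro x y hxy h1 h2
  have hne : (x : ℕ) ≠ y := fun h => hxy (Fin.ext h)
  rw [edgesDisjoint_iff]
  simp only [Equiv.trans_apply, RingEquiv.toEquiv_eq_coe, EquivLike.coe_coe, e]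
  rcases lt_or_gt_of_ne hne with h | h
  · exact cyclic_good_dist f hf _ _ (by omega) (by omega)
  · exact (cyclic_good_dist f hf _ _ (by omega) (by omega)).symm

theorem ms_even (k : ℕ) (hk : 1 ≤ k) : ms (⊤ : SimpleGraph (Fin (2 * (k + 1)))) = k := by
  have hc := choose_even k
  have hN := edgeCount_top (2 * (k + 1))
  apply IsGreatest.csSup_eq
  refine ⟨⟨?_, linear_of_cyclic _ _ (by rw [hc]; positivity) (cyclic_even k hk)⟩, ?_⟩
  · rw [hN, hc]; nlinarith
  · rintro d ⟨_, f, hf⟩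
    have := linear_upper (2 * (k + 1)) (k + 1) d (by omega) (by omega) (by rw [hc]; nlinarith) f hf
    omega

/-- For every integer `n ≥ 4`, `cms (K_n) = ms (K_n)` if `n` is even,
and `cms (K_n) = ms (K_n) - 1` if `n` is odd. -/
theorem cms_eq_ms_completeGraph (n : ℕ) (hn : 4 ≤ n) :
    cms (⊤ : SimpleGraph (Fin n)) =
      if Even n then ms (⊤ : SimpleGraph (Fin n)) else ms (⊤ : SimpleGraph (Fin n)) - 1 := by
  split_ifs with h
  · obtain ⟨r, rfl⟩ := h
    obtain ⟨k, rfl⟩ : ∃ k, r = k + 1 := ⟨r - 1, by omega⟩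
    rw [← two_mul, cms_even k (by omega), ms_even k (by omega)]
  · obtain ⟨k, rfl⟩ := Nat.not_even_iff_odd.1 h
    rw [cms_odd k (by omega), ms_odd k (by omega)]
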